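/- Let α > 1, and for S_i → ∞, T_i with 0 ≤ S_i < T_i ≤ ∞ and S_i^α √(S_i^{−α+1} − T_i^{−α+1}) → ∞, let d_{S_i}^{T_i} be the length metric on ℝ³ induced by the conformal metric Φ_{S_i}^{T_i}·h₀ where Φ_S^T(ζ) = ∫_S^T dx/|ζ − (x^α,0,0)|. Then (ℝ³, d_{S_i}^{T_i}, 0) converges to (ℝ³, Euclidean metric, 0) in the pointed Gromov–Hausdorff topology. -/

import Mathlib

open MeasureTheory Set

noncomputable section

abbrev E3 := WithLp 2 (ℝ × ℂ)

def axPt (α x : ℝ) : E3 := (WithLp.equiv 2 (ℝ × ℂ)).symm (x ^ α, 0)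

def epow (T : EReal) (e : ℝ) : ℝ := if T = ⊤ then 0 else T.toReal ^ e

/-- The conformal factor `Φ_S^T(ζ) = ∫_S^T dx/|ζ - (x^α,0,0)|` (with `T ≤ ∞`). -/
def PhiST (α S : ℝ) (T : EReal) (ζ : E3) : ℝ :=
  (∫⁻ x in {x : ℝ | S < x ∧ (x : EReal) < T},
    ENNReal.ofReal (1 / ‖ζ - axPt α x‖)).toReal

/-- The length metric on `ℝ³` induced by the conformal metric `Φ·h₀`: the infimum of
`∫ √(Φ(γ))|γ'|` over `C¹` paths joining `x` and `y`. -/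
def confDist (Φ : E3 → ℝ) (x y : E3) : ℝ :=
  (⨅ γ : {γ : ℝ → E3 // ContDiff ℝ 1 γ ∧ γ 0 = x ∧ γ 1 = y},
    ∫⁻ t in Icc (0 : ℝ) 1,
      ENNReal.ofReal (Real.sqrt (Φ (γ.1 t)) * ‖deriv γ.1 t‖)).toReal

/-- `f` is an `(r,ε)`-isometry from `(ℝ³,d₁,0)` to `(ℝ³,d₂,0)`. -/
def IsPGHApprox (d₁ d₂ : E3 → E3 → ℝ) (r ε : ℝ) (f : E3 → E3) : Prop :=
  f 0 = 0 ∧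
  (∀ x y : E3, d₁ 0 x < r → d₁ 0 y < r → |d₁ x y - d₂ (f x) (f y)| < ε) ∧
  (∀ z : E3, d₂ 0 z < r - ε → ∃ x : E3, d₁ 0 x < r ∧ d₂ (f x) z < ε)

/-!
On the Euclidean ball of radius `δ S^α` every source `(x^α, 0, 0)`, `x > S`, is at least `δ⁻¹` times
farther from the origin than the evaluation point, so there `Φ_S^T` equals its value `λ²` at the
origin up to a factor `1 + O(δ)`.  As `λ² = (S^{1-α} - T^{1-α}) / (α - 1)`, the growth hypothesis
says that this ball has radius `λ δ S^α → ∞` in the metric `λ² h₀`.  A path between points near the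
origin either stays in the ball, where it has nearly its `λ² h₀`-length, or is long because it has
to reach the boundary of the ball; hence the homothety `x ↦ λ x` is the required almost isometry.

Since `confDist` is `0` when all joining paths have infinite length, points far from the origin
also have to be shown to be at finite distance from it.  The factor is `O(1 / ρ)` at distance `ρ`
from the axis of the sources, so a path suffices that leaves and reaches the axis like `ρ = t²`.
-/

section ConformalLength

variable {E : Type*} [NormedAddCommGroup E] [NormedSpace ℝ E] {Φ : E → ℝ} {γ : ℝ → E} {c : ℝ}

/-- The length `∫₀¹ √(Φ(γ)) |γ'|` of a path for the conformal metric `Φ · h₀`. -/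
def conformalLength (Φ : E → ℝ) (γ : ℝ → E) : ENNReal :=
  ∫⁻ t in Icc (0 : ℝ) 1, ENNReal.ofReal (√(Φ (γ t)) * ‖deriv γ t‖)

/-- The length distance of the conformal metric `Φ · h₀`, with values in `[0, ∞]`: unlike its real
part `confDist`, it is not `0` when all joining paths have infinite length. -/
def conformalEDist (Φ : E → ℝ) (x y : E) : ENNReal :=
  ⨅ γ : {γ : ℝ → E // ContDiff ℝ 1 γ ∧ γ 0 = x ∧ γ 1 = y}, conformalLength Φ γ.1

lemma confDist_eq_toReal (Φ : E3 → ℝ) (x y : E3) :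
    confDist Φ x y = (conformalEDist Φ x y).toReal := rfl

lemma conformalEDist_le_conformalLength (hγ : ContDiff ℝ 1 γ) :
    conformalEDist Φ (γ 0) (γ 1) ≤ conformalLength Φ γ :=
  iInf_le (fun γ' : {γ' : ℝ → E // ContDiff ℝ 1 γ' ∧ γ' 0 = γ 0 ∧ γ' 1 = γ 1} ↦
    conformalLength Φ γ'.1) ⟨γ, hγ, rfl, rfl⟩

lemma conformalLength_le_ofReal (h : ∀ t ∈ Ioo (0 : ℝ) 1, √(Φ (γ t)) * ‖deriv γ t‖ ≤ c) :
    conformalLength Φ γ ≤ ENNReal.ofReal c := by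
  calc conformalLength Φ γ
      = ∫⁻ t in Ioo (0 : ℝ) 1, ENNReal.ofReal (√(Φ (γ t)) * ‖deriv γ t‖) :=
        setLIntegral_congr Ioo_ae_eq_Icc.symm
    _ ≤ ∫⁻ _ in Ioo (0 : ℝ) 1, ENNReal.ofReal c :=
        setLIntegral_mono' measurableSet_Ioo fun t ht ↦ ENNReal.ofReal_le_ofReal (h t ht)
    _ = ENNReal.ofReal c := by simp

lemma mul_norm_sub_le_conformalLength (hγ : ContDiff ℝ 1 γ) {b : ℝ} (hb : b ∈ Icc (0 : ℝ) 1)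
    (h : ∀ t ∈ Ico 0 b, c ≤ √(Φ (γ t))) :
    ENNReal.ofReal (c * ‖γ b - γ 0‖) ≤ conformalLength Φ γ := by
  calc ENNReal.ofReal (c * ‖γ b - γ 0‖)
      = ENNReal.ofReal c * ‖γ b - γ 0‖ₑ := by
        rw [ENNReal.ofReal_mul' (norm_nonneg _), ofReal_norm]
    _ ≤ ENNReal.ofReal c * ∫⁻ t in Icc 0 b, ‖deriv γ t‖ₑ := by
        gcongr
        exact enorm_sub_le_lintegral_deriv_of_contDiffOn_Icc hγ.contDiffOn hb.1
    _ = ∫⁻ t in Ico 0 b, ENNReal.ofReal c * ‖deriv γ t‖ₑ := by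
        rw [lintegral_const_mul' _ _ ENNReal.ofReal_ne_top, setLIntegral_congr Ico_ae_eq_Icc]
    _ ≤ ∫⁻ t in Ico 0 b, ENNReal.ofReal (√(Φ (γ t)) * ‖deriv γ t‖) := by
        refine setLIntegral_mono' measurableSet_Ico fun t ht ↦ ?_
        rw [ENNReal.ofReal_mul' (norm_nonneg _), ofReal_norm]
        gcongr
        exact h t ht
    _ ≤ conformalLength Φ γ :=
        lintegral_mono_set fun t ht ↦ ⟨ht.1, ht.2.le.trans hb.2⟩

lemma mul_min_dist_le_conformalEDist {x : E} (y : E) {R : ℝ} (hc : 0 ≤ c)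
    (h : ∀ ζ ∈ Metric.ball x R, c ≤ √(Φ ζ)) :
    ENNReal.ofReal (c * min (dist x y) R) ≤ conformalEDist Φ x y := by
  refine le_iInf ?_
  rintro ⟨γ, hγ, rfl, rfl⟩
  -- Only the part of the path before it first reaches distance `m` from its origin is needed.
  set m := min (dist (γ 0) (γ 1)) R
  have hcompact : IsCompact (Icc (0 : ℝ) 1 ∩ {t | m ≤ dist (γ t) (γ 0)}) :=
    isCompact_Icc.inter_right
      (isClosed_le continuous_const (hγ.continuous.dist continuous_const))
  have hend : m ≤ dist (γ 1) (γ 0) := dist_comm (γ 0) (γ 1) ▸ min_le_left _ _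
  obtain ⟨τ, ⟨hτ, hmτ⟩, hfirst⟩ :=
    hcompact.exists_isLeast ⟨1, right_mem_Icc.2 zero_le_one, hend⟩
  have hbefore : ∀ t ∈ Ico 0 τ, c ≤ √(Φ (γ t)) := by
    refine fun t ht ↦ h _ (Metric.ball_subset_ball (min_le_right (dist (γ 0) (γ 1)) R) ?_)
    by_contra hfar
    rw [Metric.mem_ball, not_lt] at hfar
    exact ht.2.not_ge (hfirst ⟨⟨ht.1, ht.2.le.trans hτ.2⟩, hfar⟩)
  calc ENNReal.ofReal (c * m)
      ≤ ENNReal.ofReal (c * ‖γ τ - γ 0‖) := by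
        rw [← dist_eq_norm]
        gcongr
        exact hmτ
    _ ≤ conformalLength Φ γ := mul_norm_sub_le_conformalLength hγ hτ hbefore

lemma conformalEDist_le_mul_dist {s : Set E} (hs : Convex ℝ s) {x y : E} (hx : x ∈ s) (hy : y ∈ s)
    (h : ∀ ζ ∈ s, √(Φ ζ) ≤ c) :
    conformalEDist Φ x y ≤ ENNReal.ofReal (c * dist x y) := by
  have hlength : conformalLength Φ (AffineMap.lineMap x y) ≤ ENNReal.ofReal (c * dist x y) := by
    refine conformalLength_le_ofReal fun t ht ↦ ?_
    rw [AffineMap.hasDerivAt_lineMap.deriv, ← dist_eq_norm, dist_comm]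
    gcongr
    exact h _ (hs.lineMap_mem hx hy ⟨ht.1.le, ht.2.le⟩)
  simpa only [AffineMap.lineMap_apply_zero, AffineMap.lineMap_apply_one] using
    (conformalEDist_le_conformalLength (AffineMap.contDiff_lineMap x y)).trans hlength

end ConformalLength

section BentPath

variable {E : Type*} [NormedAddCommGroup E] [NormedSpace ℝ E] (x e : E) {t : ℝ}

/-- A path from `0` to `x` which is bent in the direction `e` and whose velocity vanishes at both
ends, at a rate that compensates a singularity of `√Φ` there. -/
def bentPath (x e : E) (t : ℝ) : E :=
  (3 * t ^ 2 - 2 * t ^ 3) • x + (t * (1 - t)) ^ 2 • e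

lemma contDiff_bentPath : ContDiff ℝ 1 (bentPath x e) := by
  unfold bentPath
  fun_prop

lemma deriv_bentPath (t : ℝ) :
    deriv (bentPath x e) t = (t * (1 - t)) • ((6 : ℝ) • x + (2 * (1 - 2 * t)) • e) := by
  have hx : HasDerivAt (fun t : ℝ ↦ 3 * t ^ 2 - 2 * t ^ 3) (6 * (t * (1 - t))) t := by
    convert! ((hasDerivAt_pow 2 t).const_mul 3).sub ((hasDerivAt_pow 3 t).const_mul 2) using 1
    ring
  have he : HasDerivAt (fun t : ℝ ↦ (t * (1 - t)) ^ 2) (2 * (t * (1 - t)) * (1 - 2 * t)) t := by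
    convert! ((hasDerivAt_id' t).fun_mul ((hasDerivAt_id' t).const_sub 1)).fun_pow 2 using 1
    ring
  have hpath : HasDerivAt (bentPath x e) _ t := (hx.smul_const x).add (he.smul_const e)
  rw [hpath.deriv]
  module

lemma norm_bentPath_le (ht : t ∈ Ioo (0 : ℝ) 1) : ‖bentPath x e t‖ ≤ ‖x‖ + ‖e‖ := by
  have hx : 0 ≤ 3 * t ^ 2 - 2 * t ^ 3 ∧ 3 * t ^ 2 - 2 * t ^ 3 ≤ 1 := by
    constructor <;> nlinarith [ht.1, ht.2, sq_nonneg t, sq_nonneg (1 - t)]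
  have he : (t * (1 - t)) ^ 2 ≤ 1 := by
    apply pow_le_one₀ <;> nlinarith [ht.1, ht.2]
  refine (norm_add_le _ _).trans (add_le_add ?_ ?_) <;>
    rw [norm_smul, Real.norm_of_nonneg (by first | exact hx.1 | positivity)]
  · exact mul_le_of_le_one_left (norm_nonneg x) hx.2
  · exact mul_le_of_le_one_left (norm_nonneg e) he

lemma norm_deriv_bentPath_le (ht : t ∈ Ioo (0 : ℝ) 1) :
    ‖deriv (bentPath x e) t‖ ≤ t * (1 - t) * (6 * ‖x‖ + 2 * ‖e‖) := by
  have hm : 0 ≤ t * (1 - t) := mul_nonneg ht.1.le (sub_nonneg.2 ht.2.le)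
  rw [deriv_bentPath, norm_smul, Real.norm_of_nonneg hm]
  gcongr
  refine (norm_add_le _ _).trans (add_le_add ?_ ?_) <;> rw [norm_smul, Real.norm_eq_abs]
  · norm_num
  · gcongr
    rw [abs_le]
    constructor <;> linarith [ht.1, ht.2]

end BentPath

section SingularAxis

variable {p : ENNReal} [Fact (1 ≤ p)] {V W : Type*} [NormedAddCommGroup V] [NormedSpace ℝ V]
  [NormedAddCommGroup W] [NormedSpace ℝ W]

lemma exists_norm_eq_one_and_sameRay [Nontrivial W] (w : W) : ∃ v : W, ‖v‖ = 1 ∧ SameRay ℝ w v := by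
  rcases eq_or_ne w 0 with rfl | hw
  · obtain ⟨v, hv⟩ := exists_norm_eq W zero_le_one
    exact ⟨v, hv, SameRay.zero_left v⟩
  · exact ⟨‖w‖⁻¹ • w, norm_smul_inv_norm hw,
      SameRay.sameRay_nonneg_smul_right w (inv_nonneg.2 (norm_nonneg w))⟩

lemma sq_le_norm_snd_bentPath {x : WithLp p (V × W)} {v : W} {t : ℝ} (hv : ‖v‖ = 1)
    (hxv : SameRay ℝ x.snd v) (ht : t ∈ Ioo (0 : ℝ) 1) :
    (t * (1 - t)) ^ 2 ≤ ‖(bentPath x (WithLp.toLp p (0, v)) t).snd‖ := by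
  have hx : 0 ≤ 3 * t ^ 2 - 2 * t ^ 3 := by nlinarith [ht.1, ht.2, sq_nonneg t]
  have hray : SameRay ℝ ((3 * t ^ 2 - 2 * t ^ 3) • x.snd) ((t * (1 - t)) ^ 2 • v) :=
    (hxv.nonneg_smul_left hx).nonneg_smul_right (sq_nonneg _)
  calc (t * (1 - t)) ^ 2
      = ‖(t * (1 - t)) ^ 2 • v‖ := by
        rw [norm_smul, hv, mul_one, Real.norm_of_nonneg (sq_nonneg _)]
    _ ≤ ‖(3 * t ^ 2 - 2 * t ^ 3) • x.snd‖ + ‖(t * (1 - t)) ^ 2 • v‖ :=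
        le_add_of_nonneg_left (norm_nonneg _)
    _ = ‖(bentPath x (WithLp.toLp p (0, v)) t).snd‖ := hray.norm_add.symm

lemma conformalEDist_zero_ne_top_of_le_div_norm_snd [Nontrivial W] {Φ : WithLp p (V × W) → ℝ}
    {x : WithLp p (V × W)} {C : ℝ} (hC : 0 ≤ C)
    (hΦ : ∀ ζ, ‖ζ‖ ≤ ‖x‖ + 1 → ζ.snd ≠ 0 → Φ ζ ≤ C / ‖ζ.snd‖) :
    conformalEDist Φ 0 x ≠ ⊤ := by
  obtain ⟨v, hv, hxv⟩ := exists_norm_eq_one_and_sameRay x.snd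
  set e : WithLp p (V × W) := WithLp.toLp p (0, v)
  have he : ‖e‖ = 1 := by rw [WithLp.norm_toLp_snd, hv]
  have hlength : conformalLength Φ (bentPath x e) ≤ ENNReal.ofReal (√C * (6 * ‖x‖ + 2 * ‖e‖)) := by
    refine conformalLength_le_ofReal fun t ht ↦ ?_
    have hm : 0 < t * (1 - t) := mul_pos ht.1 (sub_pos.2 ht.2)
    have hsnd : (t * (1 - t)) ^ 2 ≤ ‖(bentPath x e t).snd‖ := sq_le_norm_snd_bentPath hv hxv ht
    have hsnd_ne : (bentPath x e t).snd ≠ 0 := norm_pos_iff.1 ((pow_pos hm 2).trans_le hsnd)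
    have hsqrt : √(Φ (bentPath x e t)) ≤ √C / (t * (1 - t)) := by
      rw [← Real.sqrt_sq hm.le, ← Real.sqrt_div hC]
      refine Real.sqrt_le_sqrt ((hΦ _ (he ▸ norm_bentPath_le x e ht) hsnd_ne).trans ?_)
      gcongr
    calc √(Φ (bentPath x e t)) * ‖deriv (bentPath x e) t‖
        ≤ √C / (t * (1 - t)) * (t * (1 - t) * (6 * ‖x‖ + 2 * ‖e‖)) := by
          gcongr
          exact norm_deriv_bentPath_le x e ht
      _ = √C * (6 * ‖x‖ + 2 * ‖e‖) := by rw [← mul_assoc, div_mul_cancel₀ _ hm.ne']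
  have hends : bentPath x e 0 = 0 ∧ bentPath x e 1 = x := by
    constructor <;> norm_num [bentPath]
  have hdist := (conformalEDist_le_conformalLength (Φ := Φ) (contDiff_bentPath x e)).trans hlength
  rw [hends.1, hends.2] at hdist
  exact ne_top_of_le_ne_top ENNReal.ofReal_ne_top hdist

end SingularAxis

section AlmostConstantFactor

variable {E : Type*} [NormedAddCommGroup E] [NormedSpace ℝ E] {Φ : E → ℝ} {ρ c L η r : ℝ}
  {x y : E}

lemma toReal_conformalEDist_le_mul_dist (hx : ‖x‖ ≤ ρ) (hy : ‖y‖ ≤ ρ)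
    (h : ∀ ζ, ‖ζ‖ ≤ ρ → √(Φ ζ) ≤ c) :
    (conformalEDist Φ x y).toReal ≤ c * dist x y := by
  have hc : 0 ≤ c := (Real.sqrt_nonneg _).trans (h x hx)
  refine ENNReal.toReal_le_of_le_ofReal (by positivity)
    (conformalEDist_le_mul_dist (convex_closedBall 0 ρ) ?_ ?_ ?_)
  all_goals simpa only [mem_closedBall_zero_iff]

lemma mul_min_dist_le_toReal_conformalEDist (hfin : conformalEDist Φ x y ≠ ⊤) (hc : 0 ≤ c)
    (h : ∀ ζ, ‖ζ‖ ≤ ρ → c ≤ √(Φ ζ)) :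
    c * min (dist x y) (ρ - ‖x‖) ≤ (conformalEDist Φ x y).toReal := by
  refine (ENNReal.ofReal_le_iff_le_toReal hfin).1
    (mul_min_dist_le_conformalEDist y hc fun ζ hζ ↦ h ζ ?_)
  linarith [norm_sub_norm_le ζ x, mem_ball_iff_norm.1 hζ]

lemma abs_toReal_conformalEDist_sub_le (hL : 0 ≤ L) (hη : η ≤ 1)
    (hΦ : ∀ ζ, ‖ζ‖ ≤ ρ → √(Φ ζ) ∈ Icc ((1 - η) * L) ((1 + η) * L))
    (hy : ‖y‖ ≤ ρ) (hxy : dist x y ≤ ρ - ‖x‖) :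
    |(conformalEDist Φ x y).toReal - L * dist x y| ≤ η * (L * dist x y) := by
  have hx : ‖x‖ ≤ ρ := sub_nonneg.1 (dist_nonneg.trans hxy)
  have hupper := toReal_conformalEDist_le_mul_dist hx hy fun ζ hζ ↦ (hΦ ζ hζ).2
  have hfin : conformalEDist Φ x y ≠ ⊤ :=
    ne_top_of_le_ne_top ENNReal.ofReal_ne_top
      (conformalEDist_le_mul_dist (convex_closedBall 0 ρ) (mem_closedBall_zero_iff.2 hx)
        (mem_closedBall_zero_iff.2 hy) fun ζ hζ ↦ (hΦ ζ (mem_closedBall_zero_iff.1 hζ)).2)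
  have hlower := mul_min_dist_le_toReal_conformalEDist hfin (mul_nonneg (sub_nonneg.2 hη) hL)
    fun ζ hζ ↦ (hΦ ζ hζ).1
  rw [min_eq_left hxy] at hlower
  rw [abs_le]
  constructor <;> linarith

lemma mul_norm_lt_of_toReal_conformalEDist_zero_lt (hc : 0 ≤ c)
    (hfin : conformalEDist Φ 0 x ≠ ⊤) (hΦ : ∀ ζ, ‖ζ‖ ≤ ρ → c ≤ √(Φ ζ)) (hρ : r ≤ c * ρ)
    (hx : (conformalEDist Φ 0 x).toReal < r) :
    c * ‖x‖ < r := by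
  have hmin := (mul_min_dist_le_toReal_conformalEDist hfin hc hΦ).trans_lt hx
  rw [dist_zero_left, norm_zero, sub_zero] at hmin
  rcases min_choice ‖x‖ ρ with hm | hm <;> rw [hm] at hmin <;> linarith

end AlmostConstantFactor

lemma isPGHApprox_smul {Φ : E3 → ℝ} {ρ L η r ε : ℝ} (hL : 0 < L) (hη₀ : 0 ≤ η) (hη : η ≤ 1 / 2)
    (hr : 0 < r) (hρ : 6 * r ≤ L * ρ) (hε : 4 * r * η < ε)
    (hfin : ∀ x, conformalEDist Φ 0 x ≠ ⊤)
    (hΦ : ∀ ζ, ‖ζ‖ ≤ ρ → √(Φ ζ) ∈ Icc ((1 - η) * L) ((1 + η) * L)) :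
    IsPGHApprox (confDist Φ) (fun x y ↦ dist x y) r ε (fun x ↦ L • x) := by
  have hε₀ : 0 < ε := lt_of_le_of_lt (by positivity) hε
  have hhalf : ∀ ζ, ‖ζ‖ ≤ ρ → L / 2 ≤ √(Φ ζ) := fun ζ hζ ↦
    le_trans (by nlinarith) (hΦ ζ hζ).1
  have hsmall (x : E3) (hx : (conformalEDist Φ 0 x).toReal < r) : L / 2 * ‖x‖ < r :=
    mul_norm_lt_of_toReal_conformalEDist_zero_lt (half_pos hL).le (hfin x) hhalf
      (by linarith) hx
  simp only [IsPGHApprox, confDist_eq_toReal, dist_zero_left]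
  refine ⟨smul_zero L, fun x y hx hy ↦ ?_, fun z hz ↦ ⟨L⁻¹ • z, ?_, ?_⟩⟩
  · have hLxy : L * dist x y ≤ 4 * r := by
      nlinarith [hsmall x hx, hsmall y hy, dist_le_norm_add_norm x y]
    have hyρ : ‖y‖ ≤ ρ := le_of_mul_le_mul_left (by linarith [hsmall y hy]) hL
    have hxyρ : dist x y ≤ ρ - ‖x‖ := le_of_mul_le_mul_left (by linarith [hsmall x hx]) hL
    rw [dist_smul₀, Real.norm_of_nonneg hL.le]
    calc |(conformalEDist Φ x y).toReal - L * dist x y|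
        ≤ η * (L * dist x y) :=
          abs_toReal_conformalEDist_sub_le hL.le (by linarith) hΦ hyρ hxyρ
      _ ≤ η * (4 * r) := by gcongr
      _ < ε := by linarith
  · have hLz : L * ‖L⁻¹ • z‖ = ‖z‖ := by
      rw [norm_smul, Real.norm_of_nonneg (inv_nonneg.2 hL.le), mul_inv_cancel_left₀ hL.ne']
    have hzρ : ‖L⁻¹ • z‖ ≤ ρ := le_of_mul_le_mul_left (by linarith) hL
    have hzero : ‖(0 : E3)‖ ≤ ρ := norm_zero.trans_le ((norm_nonneg _).trans hzρ)
    calc (conformalEDist Φ 0 (L⁻¹ • z)).toReal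
        ≤ (1 + η) * L * dist 0 (L⁻¹ • z) :=
          toReal_conformalEDist_le_mul_dist hzero hzρ fun ζ hζ ↦ (hΦ ζ hζ).2
      _ = ‖z‖ + η * ‖z‖ := by rw [dist_zero_left, mul_assoc, hLz]; ring
      _ < r := by nlinarith
  · rwa [smul_inv_smul₀ hL.ne', dist_self]

section CoulombPotential

variable {X E : Type*} [MeasurableSpace X] [NormedAddCommGroup E] {μ : Measure X} {a : X → E}
  {ζ : E} {δ : ℝ}

/-- The potential `∫ dμ(x) / |ζ - a(x)|` at `ζ` of the charges `μ` placed at the points `a(x)`.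
Charges at `ζ` itself do not contribute, since `1 / 0 = 0`. -/
def coulombPotential (μ : Measure X) (a : X → E) (ζ : E) : ENNReal :=
  ∫⁻ x, ENNReal.ofReal (1 / ‖ζ - a x‖) ∂μ

lemma coulombPotential_le_mul {z w : E} {K : ℝ} (hw : ∀ᵐ x ∂μ, w ≠ a x)
    (h : ∀ᵐ x ∂μ, ‖w - a x‖ ≤ K * ‖z - a x‖) :
    coulombPotential μ a z ≤ ENNReal.ofReal K * coulombPotential μ a w := by
  rw [coulombPotential, coulombPotential, ← lintegral_const_mul' _ _ ENNReal.ofReal_ne_top]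
  refine lintegral_mono_ae ?_
  filter_upwards [hw, h] with x hwx hx
  have hw₀ : 0 < ‖w - a x‖ := norm_sub_pos_iff.2 hwx
  have hz₀ : 0 < ‖z - a x‖ := (norm_nonneg _).lt_of_ne' fun h₀ ↦ by
    rw [h₀, mul_zero] at hx
    exact hx.not_gt hw₀
  rw [← ENNReal.ofReal_mul' (by positivity)]
  refine ENNReal.ofReal_le_ofReal ?_
  rwa [mul_one_div, div_le_div_iff₀ hz₀ hw₀, one_mul]

lemma coulombPotential_le_of_le_norm_sub {m : ℝ} (hm : 0 < m) (ha : ∀ᵐ x ∂μ, 0 ≠ a x)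
    (h : ∀ᵐ x ∂μ, m ≤ ‖ζ - a x‖) :
    coulombPotential μ a ζ ≤ ENNReal.ofReal (1 + ‖ζ‖ / m) * coulombPotential μ a 0 := by
  refine coulombPotential_le_mul ha ?_
  filter_upwards [h] with x hx
  calc ‖0 - a x‖ ≤ ‖ζ - a x‖ + ‖ζ‖ / m * m := by
        rw [div_mul_cancel₀ _ hm.ne', add_comm]
        simpa using norm_sub_le_norm_sub_add_norm_sub 0 ζ (a x)
    _ ≤ ‖ζ - a x‖ + ‖ζ‖ / m * ‖ζ - a x‖ := by gcongr
    _ = (1 + ‖ζ‖ / m) * ‖ζ - a x‖ := by ring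

lemma coulombPotential_le_of_norm_le_mul (hδ : δ < 1) (ha : ∀ᵐ x ∂μ, 0 ≠ a x)
    (hζ : ∀ᵐ x ∂μ, ‖ζ‖ ≤ δ * ‖a x‖) :
    coulombPotential μ a ζ ≤ ENNReal.ofReal (1 / (1 - δ)) * coulombPotential μ a 0 := by
  refine coulombPotential_le_mul ha ?_
  filter_upwards [hζ] with x hx
  rw [zero_sub, norm_neg, one_div_mul_eq_div, le_div_iff₀ (sub_pos.2 hδ)]
  linarith [norm_sub_norm_le (a x) ζ, norm_sub_rev (a x) ζ]

lemma coulombPotential_zero_le_of_norm_le_mul (hδ : δ < 1) (ha : ∀ᵐ x ∂μ, 0 ≠ a x)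
    (hζ : ∀ᵐ x ∂μ, ‖ζ‖ ≤ δ * ‖a x‖) :
    coulombPotential μ a 0 ≤ ENNReal.ofReal (1 + δ) * coulombPotential μ a ζ := by
  refine coulombPotential_le_mul ?_ ?_
  · filter_upwards [ha, hζ] with x hax hx hζx
    rw [hζx] at hx
    nlinarith [norm_pos_iff.2 hax.symm]
  · filter_upwards [hζ] with x hx
    rw [zero_sub, norm_neg]
    linarith [norm_sub_le ζ (a x)]

lemma sqrt_toReal_coulombPotential_mem_Icc (hδ₀ : 0 ≤ δ) (hδ : δ ≤ 1 / 2)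
    (ha : ∀ᵐ x ∂μ, 0 ≠ a x) (hζ : ∀ᵐ x ∂μ, ‖ζ‖ ≤ δ * ‖a x‖)
    (hfin : coulombPotential μ a 0 ≠ ⊤) :
    √(coulombPotential μ a ζ).toReal ∈
      Icc ((1 - δ) * √(coulombPotential μ a 0).toReal)
        ((1 + δ) * √(coulombPotential μ a 0).toReal) := by
  have hδ' : 0 < 1 - δ := by linarith
  have hupper := coulombPotential_le_of_norm_le_mul (by linarith) ha hζ
  have hlower := coulombPotential_zero_le_of_norm_le_mul (by linarith) ha hζ
  have hbound : ENNReal.ofReal (1 / (1 - δ)) * coulombPotential μ a 0 ≠ ⊤ :=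
    ENNReal.mul_ne_top ENNReal.ofReal_ne_top hfin
  have hfinζ : ENNReal.ofReal (1 + δ) * coulombPotential μ a ζ ≠ ⊤ :=
    ENNReal.mul_ne_top ENNReal.ofReal_ne_top (ne_top_of_le_ne_top hbound hupper)
  replace hupper := ENNReal.toReal_mono hbound hupper
  replace hlower := ENNReal.toReal_mono hfinζ hlower
  rw [ENNReal.toReal_mul, ENNReal.toReal_ofReal (by positivity)] at hupper hlower
  set u₀ := (coulombPotential μ a 0).toReal
  set u := (coulombPotential μ a ζ).toReal
  have hu₀ : 0 ≤ u₀ := ENNReal.toReal_nonneg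
  constructor
  · refine Real.le_sqrt_of_sq_le ?_
    calc ((1 - δ) * √u₀) ^ 2 = (1 - δ) ^ 2 * u₀ := by rw [mul_pow, Real.sq_sqrt hu₀]
      _ ≤ (1 - δ) ^ 2 * ((1 + δ) * u) := by gcongr
      _ = ((1 - δ) * (1 - δ ^ 2)) * u := by ring
      _ ≤ u := mul_le_of_le_one_left ENNReal.toReal_nonneg (by nlinarith)
  · refine Real.sqrt_le_iff.2 ⟨by positivity, ?_⟩
    calc u ≤ 1 / (1 - δ) * u₀ := hupper
      _ ≤ (1 + δ) ^ 2 * u₀ := by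
        gcongr
        rw [div_le_iff₀ hδ']
        nlinarith [mul_nonneg hδ₀ (show 0 ≤ 1 - δ - δ ^ 2 by nlinarith)]
      _ = ((1 + δ) * √u₀) ^ 2 := by rw [mul_pow, Real.sq_sqrt hu₀]

end CoulombPotential

section PhiST

variable {α S : ℝ} {T : EReal} {ζ : E3}

/-- The domain of integration of `PhiST`, a subset of `ℝ` whose right end may be `∞`. -/
def realIoo (S : ℝ) (T : EReal) : Set ℝ := {x : ℝ | S < x ∧ (x : EReal) < T}

lemma measurableSet_realIoo : MeasurableSet (realIoo S T) :=
  measurableSet_Ioi.inter (measurableSet_lt measurable_coe_real_ereal measurable_const)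

lemma PhiST_eq_toReal_coulombPotential (α S : ℝ) (T : EReal) (ζ : E3) :
    PhiST α S T ζ = (coulombPotential (volume.restrict (realIoo S T)) (axPt α) ζ).toReal := rfl

lemma norm_axPt (α : ℝ) {x : ℝ} (hx : 0 ≤ x) : ‖axPt α x‖ = x ^ α :=
  (WithLp.norm_toLp_fst 2 ℝ ℂ (x ^ α)).trans (Real.norm_of_nonneg (Real.rpow_nonneg hx α))

lemma ae_rpow_lt_norm_axPt (hα : 0 < α) (hS : 0 < S) :
    ∀ᵐ x ∂volume.restrict (realIoo S T), S ^ α < ‖axPt α x‖ := by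
  filter_upwards [ae_restrict_mem measurableSet_realIoo] with x hx
  rw [norm_axPt α (hS.trans hx.1).le]
  exact Real.rpow_lt_rpow hS.le hx.1 hα

lemma ae_zero_ne_axPt (hα : 0 < α) (hS : 0 < S) :
    ∀ᵐ x ∂volume.restrict (realIoo S T), 0 ≠ axPt α x := by
  filter_upwards [ae_rpow_lt_norm_axPt hα hS] with x hx
  exact (norm_pos_iff.1 ((Real.rpow_nonneg hS.le α).trans_lt hx)).symm

lemma coulombPotential_axPt_zero (α : ℝ) (hS : 0 < S) (T : EReal) :
    coulombPotential (volume.restrict (realIoo S T)) (axPt α) 0 =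
      ∫⁻ x in realIoo S T, ENNReal.ofReal (x ^ (-α)) := by
  refine setLIntegral_congr_fun measurableSet_realIoo fun x hx ↦ ?_
  have hx₀ : 0 ≤ x := (hS.trans hx.1).le
  rw [zero_sub, norm_neg, norm_axPt α hx₀, Real.rpow_neg hx₀, one_div]

lemma coulombPotential_axPt_zero_ne_top (hα : 1 < α) (hS : 0 < S) (T : EReal) :
    coulombPotential (volume.restrict (realIoo S T)) (axPt α) 0 ≠ ⊤ := by
  have hint : IntegrableOn (fun x : ℝ ↦ x ^ (-α)) (realIoo S T) :=
    (integrableOn_Ioi_rpow_of_lt (neg_lt_neg hα) hS).mono_set fun x hx ↦ hx.1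
  rw [coulombPotential_axPt_zero α hS]
  exact hint.lintegral_lt_top.ne

lemma setIntegral_realIoo_rpow_neg (hα : 1 < α) (hS : 0 < S) (hST : (S : EReal) < T) :
    ∫ x in realIoo S T, x ^ (-α) = (S ^ (1 - α) - epow T (1 - α)) / (α - 1) := by
  have hα' : -α + 1 = 1 - α := by ring
  have hα'' : α - 1 = -(1 - α) := by ring
  induction T using EReal.rec with
  | bot => exact absurd hST not_lt_bot
  | top =>
    have hdom : realIoo S ⊤ = Ioi S := by ext x; simp [realIoo]
    rw [hdom, integral_Ioi_rpow_of_lt (neg_lt_neg hα) hS, hα', hα'', epow, if_pos rfl, sub_zero,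
      div_neg, neg_div]
  | coe t =>
    have hSt : S < t := EReal.coe_lt_coe_iff.1 hST
    have hdom : realIoo S t = Ioo S t := by ext x; simp [realIoo]
    have hzero : (0 : ℝ) ∉ uIcc S t := notMem_uIcc_of_lt hS (hS.trans hSt)
    rw [hdom, ← integral_Ioc_eq_integral_Ioo, ← intervalIntegral.integral_of_le hSt.le,
      integral_rpow (.inr ⟨by linarith, hzero⟩), hα', hα'', epow, if_neg (EReal.coe_ne_top t),
      EReal.toReal_coe, div_neg, ← neg_div, neg_sub]

lemma PhiST_zero (hα : 1 < α) (hS : 0 < S) (hST : (S : EReal) < T) :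
    PhiST α S T 0 = (S ^ (1 - α) - epow T (1 - α)) / (α - 1) := by
  rw [PhiST_eq_toReal_coulombPotential, coulombPotential_axPt_zero α hS,
    ← setIntegral_realIoo_rpow_neg hα hS hST, integral_eq_lintegral_of_nonneg_ae]
  · filter_upwards [ae_restrict_mem measurableSet_realIoo] with x hx
    exact Real.rpow_nonneg (hS.trans hx.1).le _
  · exact (measurable_id.pow_const (-α)).aestronglyMeasurable

lemma PhiST_le_mul_PhiST_zero (hα : 1 < α) (hS : 0 < S) (hζ : ζ.snd ≠ 0) :
    PhiST α S T ζ ≤ (1 + ‖ζ‖ / ‖ζ.snd‖) * PhiST α S T 0 := by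
  have hdist (x : ℝ) : ‖ζ.snd‖ ≤ ‖ζ - axPt α x‖ := by
    simpa [axPt] using WithLp.norm_snd_le ℝ (ζ - axPt α x)
  have hle := coulombPotential_le_of_le_norm_sub (norm_pos_iff.2 hζ)
    (ae_zero_ne_axPt (T := T) (zero_lt_one.trans hα) hS) (.of_forall hdist)
  have hfin := ENNReal.mul_ne_top (ENNReal.ofReal_ne_top (r := 1 + ‖ζ‖ / ‖ζ.snd‖))
    (coulombPotential_axPt_zero_ne_top hα hS T)
  have hnonneg : 0 ≤ 1 + ‖ζ‖ / ‖ζ.snd‖ := by positivity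
  simpa only [PhiST_eq_toReal_coulombPotential, ENNReal.toReal_mul,
    ENNReal.toReal_ofReal hnonneg] using ENNReal.toReal_mono hfin hle

lemma conformalEDist_PhiST_zero_ne_top (hα : 1 < α) (hS : 0 < S) (x : E3) :
    conformalEDist (PhiST α S T) 0 x ≠ ⊤ := by
  have hΦ₀ : 0 ≤ PhiST α S T 0 := ENNReal.toReal_nonneg
  refine conformalEDist_zero_ne_top_of_le_div_norm_snd
    (C := 2 * (‖x‖ + 1) * PhiST α S T 0) (by positivity) fun ζ hζ hsnd ↦ ?_
  have hsnd₀ : 0 < ‖ζ.snd‖ := norm_pos_iff.2 hsnd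
  have hfactor : 1 + ‖ζ‖ / ‖ζ.snd‖ ≤ 2 * (‖x‖ + 1) / ‖ζ.snd‖ := by
    rw [le_div_iff₀ hsnd₀, add_mul, div_mul_cancel₀ _ hsnd₀.ne']
    linarith [WithLp.norm_snd_le ℝ ζ]
  calc PhiST α S T ζ ≤ (1 + ‖ζ‖ / ‖ζ.snd‖) * PhiST α S T 0 := PhiST_le_mul_PhiST_zero hα hS hsnd
    _ ≤ 2 * (‖x‖ + 1) / ‖ζ.snd‖ * PhiST α S T 0 := by gcongr
    _ = 2 * (‖x‖ + 1) * PhiST α S T 0 / ‖ζ.snd‖ := div_mul_eq_mul_div _ _ _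

lemma sqrt_PhiST_mem_Icc {δ : ℝ} (hα : 1 < α) (hS : 0 < S) (hδ₀ : 0 ≤ δ) (hδ : δ ≤ 1 / 2)
    (hζ : ‖ζ‖ ≤ δ * S ^ α) :
    √(PhiST α S T ζ) ∈ Icc ((1 - δ) * √(PhiST α S T 0)) ((1 + δ) * √(PhiST α S T 0)) := by
  have hα₀ : 0 < α := zero_lt_one.trans hα
  refine sqrt_toReal_coulombPotential_mem_Icc hδ₀ hδ (ae_zero_ne_axPt hα₀ hS) ?_
    (coulombPotential_axPt_zero_ne_top hα hS T)
  filter_upwards [ae_rpow_lt_norm_axPt hα₀ hS] with x hx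
  exact hζ.trans (by gcongr)

lemma tendsto_sqrt_PhiST_zero_mul_rpow {ι : Type*} {l : Filter ι} {S : ι → ℝ} {T : ι → EReal}
    (hα : 1 < α) (hST : ∀ i, (S i : EReal) < T i) (hS : Filter.Tendsto S l Filter.atTop)
    (hbig : Filter.Tendsto (fun i ↦ S i ^ α * √(S i ^ (1 - α) - epow (T i) (1 - α))) l
      Filter.atTop) :
    Filter.Tendsto (fun i ↦ √(PhiST α (S i) (T i) 0) * S i ^ α) l Filter.atTop := by
  have hα' : 0 < α - 1 := sub_pos.2 hα
  refine (hbig.atTop_div_const (Real.sqrt_pos.2 hα')).congr' ?_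
  filter_upwards [hS.eventually_gt_atTop 0] with i hi
  rw [PhiST_zero hα hi (hST i), Real.sqrt_div' _ hα'.le]
  ring

end PhiST

/-- If `S_i → ∞` and `S_i^α √(S_i^{1-α} - T_i^{1-α}) → ∞`, then
`(ℝ³, d_{S_i}^{T_i}, 0)` converges to Euclidean `(ℝ³, h₀, 0)` in the pointed
Gromov–Hausdorff sense (existence of `(r,ε)`-isometries for all `r, ε`). -/
theorem stmt17 (α : ℝ) (hα : 1 < α) (S : ℕ → ℝ) (T : ℕ → EReal)
    (hST : ∀ i, 0 ≤ S i ∧ (S i : EReal) < T i)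
    (hS : Filter.Tendsto S Filter.atTop Filter.atTop)
    (hbig : Filter.Tendsto
      (fun i => S i ^ α * Real.sqrt (S i ^ (1 - α) - epow (T i) (1 - α)))
      Filter.atTop Filter.atTop) :
    ∀ r > (0 : ℝ), ∀ ε > (0 : ℝ), ∃ N : ℕ, ∀ i ≥ N, ∃ f : E3 → E3,
      IsPGHApprox (confDist (PhiST α (S i) (T i))) (fun x y => dist x y) r ε f := by
  intro r hr ε hε
  obtain ⟨δ, hδ₀, hδ, hδε⟩ : ∃ δ : ℝ, 0 < δ ∧ δ ≤ 1 / 2 ∧ 4 * r * δ < ε := by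
    refine ⟨min (1 / 2) (ε / (8 * r)), by positivity, min_le_left _ _, ?_⟩
    calc 4 * r * min (1 / 2) (ε / (8 * r)) ≤ 4 * r * (ε / (8 * r)) := by
          gcongr
          exact min_le_right _ _
      _ = ε / 2 := by field_simp; norm_num
      _ < ε := half_lt_self hε
  have hradius := tendsto_sqrt_PhiST_zero_mul_rpow hα (fun i ↦ (hST i).2) hS hbig
  obtain ⟨N, hN⟩ := Filter.eventually_atTop.1
    ((hS.eventually_gt_atTop 0).and (hradius.eventually_ge_atTop (6 * r / δ)))
  refine ⟨N, fun i hi ↦ ⟨fun x ↦ √(PhiST α (S i) (T i) 0) • x, ?_⟩⟩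
  obtain ⟨hSi, hlarge⟩ := hN i hi
  have hρ : 6 * r ≤ √(PhiST α (S i) (T i) 0) * (δ * S i ^ α) := by
    rw [div_le_iff₀ hδ₀] at hlarge
    linarith
  have hL : 0 < √(PhiST α (S i) (T i) 0) :=
    pos_of_mul_pos_left (lt_of_lt_of_le (by positivity) hρ) (by positivity)
  exact isPGHApprox_smul hL hδ₀.le hδ hr hρ hδε
    (conformalEDist_PhiST_zero_ne_top hα hSi)
    fun ζ hζ ↦ sqrt_PhiST_mem_Icc hα hSi hδ₀.le hδ hζ
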